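/- Let $K$ be a field, $n, k$ positive integers, and $\alpha_1,\dots,\alpha_k$ distinct nonzero elements of $K$. With $A_i = XY^n/(X-\alpha_i Y) \in K(X,Y)$ and $R = K[Y, A_1,\dots,A_k]$, the quotient $R/YR$ is isomorphic as a $K$-algebra to $K[T_1,\dots,T_k]/(T_iT_j : i \neq j)$. -/

import Mathlib

/-!
Write `A_a = x * y ^ n / (x - a * y)`. Modulo `y` the products of two distinct generators vanish, by
the partial fraction identity `(a - b) * (A_a * A_b) = y ^ n * (a * A_a - b * A_b)`. To see that
there are no further relations, fix one generator `A_a`. Since `x` is a fractional linear function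
of `A_a` over `K(y)`, the elements `A_a` and `y` are algebraically independent, so `(y)` is a prime
ideal of `K[A_a, y]`. The same identity, solved for `A_b`, exhibits every other generator as an
element of the localization at `(y)`, divisible by `y`. Reduction modulo `y` therefore kills `y`
and all the other generators but fixes the transcendental element `A_a`. Hence a polynomial relation
modulo `y` contains no power of a single variable and no constant term, which is to say that it is a
combination of products of two distinct variables.
-/

open MvPolynomial

section CoordinateAxes

variable (σ R : Type*) [CommSemiring R]

/-- The ideal of the union of the coordinate axes, generated by the products `X i * X j` of two
distinct variables. -/
noncomputable def coordinateAxesIdeal : Ideal (MvPolynomial σ R) :=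
  Ideal.span {f | ∃ i j : σ, i ≠ j ∧ f = X i * X j}

variable {σ R}

theorem coordinateAxesIdeal_eq_span_monomial : coordinateAxesIdeal σ R =
    Ideal.span ((fun s => monomial s (1 : R)) ''
      {s | ∃ i j : σ, i ≠ j ∧ Finsupp.single i 1 + Finsupp.single j 1 = s}) := by
  refine congrArg Ideal.span (Set.ext fun f => ?_)
  simp only [Set.mem_image, Set.mem_ofPred_eq, X, monomial_mul, mul_one]
  grind

theorem mem_coordinateAxesIdeal_of_coeff_single_eq_zero [Nonempty σ] {f : MvPolynomial σ R}
    (hf : ∀ i m, coeff (Finsupp.single i m) f = 0) : f ∈ coordinateAxesIdeal σ R := by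
  rw [coordinateAxesIdeal_eq_span_monomial, mem_ideal_span_monomial_image]
  intro u hu
  obtain ⟨i, hi⟩ : ∃ i, u ≠ 0 → u i ≠ 0 := by
    by_cases h : u = 0
    · simp [h]
    · obtain ⟨i, hi⟩ := Finsupp.ne_iff.1 h
      exact ⟨i, fun _ => hi⟩
  obtain ⟨j, hij, hj⟩ : ∃ j, i ≠ j ∧ u j ≠ 0 := by
    by_contra! h
    have hsingle : u = Finsupp.single i (u i) := by
      ext j
      by_cases hij : i = j
      · simp [hij]
      · simp [hij, h j hij]
    exact mem_support_iff.1 hu (hsingle ▸ hf i (u i))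
  have hui : u i ≠ 0 := hi fun h => hj (by simp [h])
  refine ⟨_, ⟨i, j, hij, rfl⟩, fun l => ?_⟩
  classical
  simp only [Finsupp.add_apply, Finsupp.single_apply]
  grind

end CoordinateAxes

theorem coeff_single_eq_zero_of_aeval_single_eq_zero {σ R A : Type*} [DecidableEq σ] [CommRing R]
    [CommRing A] [Algebra R A] {t : A} (ht : Transcendental R t) {i : σ} {f : MvPolynomial σ R}
    (hf : aeval (Pi.single i t) f = 0) (m : ℕ) : coeff (Finsupp.single i m) f = 0 := by
  have hinj : Function.Injective fun _ : Unit => i := Function.injective_of_subsingleton _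
  have hfactor : aeval (Pi.single i t) f = aeval (fun _ : Unit => t) (killCompl hinj f) := by
    suffices aeval (Pi.single i t) = (aeval fun _ : Unit => t).comp (killCompl hinj) from
      DFunLike.congr_fun this f
    ext j
    by_cases hj : j = i <;> simp [killCompl, hj]
  have hzero : killCompl hinj f = 0 := by
    have htInd : AlgebraicIndependent R fun _ : Unit => t :=
      algebraicIndependent_unique_type_iff.2 ht
    exact (map_eq_zero_iff _ htInd).1 (hfactor ▸ hf)
  simpa [hzero] using (coeff_killCompl (p := f) hinj (s := Finsupp.single () m)).symm

theorem nonempty_quotient_algEquiv_coordinateAxes {K R L ι : Type*} [CommRing K] [CommRing R]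
    [Algebra K R] [CommRing L] [Algebra K L] [Nonempty ι] [DecidableEq ι] {y : R} {A : ι → R}
    (hgen : Algebra.adjoin K (insert y (Set.range A)) = ⊤)
    (hmul : Pairwise fun i j => y ∣ A i * A j)
    (hspec : ∀ i, ∃ (ρ : R →ₐ[K] L) (t : L), Transcendental K t ∧ ρ y = 0 ∧
      ∀ j, ρ (A j) = Pi.single (M := fun _ => L) i t j) :
    Nonempty ((R ⧸ Ideal.span {y}) ≃ₐ[K] (MvPolynomial ι K ⧸ coordinateAxesIdeal ι K)) := by
  let π : R →ₐ[K] R ⧸ Ideal.span {y} := Ideal.Quotient.mkₐ K _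
  have hπ (r : R) : π r = 0 ↔ y ∣ r := by
    simp [π, Ideal.Quotient.eq_zero_iff_mem, Ideal.mem_span_singleton]
  let φ : MvPolynomial ι K →ₐ[K] R ⧸ Ideal.span {y} := π.comp (aeval A)
  have hsurj : Function.Surjective φ := by
    have hle : Algebra.adjoin K (insert y (Set.range A)) ≤ φ.range.comap π := by
      rw [Algebra.adjoin_le_iff]
      rintro _ (rfl | ⟨i, rfl⟩)
      · exact ⟨0, by simp [(hπ _).2]⟩
      · exact ⟨X i, by simp [φ]⟩
    intro z
    obtain ⟨r, rfl⟩ := Ideal.Quotient.mkₐ_surjective K _ z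
    exact hle (hgen ▸ Algebra.mem_top)
  have hker : RingHom.ker φ = coordinateAxesIdeal ι K := by
    apply le_antisymm
    · intro f hf
      refine mem_coordinateAxesIdeal_of_coeff_single_eq_zero fun i m => ?_
      obtain ⟨ρ, t, ht, hρy, hρA⟩ := hspec i
      refine coeff_single_eq_zero_of_aeval_single_eq_zero ht ?_ m
      obtain ⟨r, hr⟩ : y ∣ aeval A f := (hπ _).1 hf
      calc aeval (Pi.single i t) f = ρ (aeval A f) := by
            rw [comp_aeval_apply, funext hρA]
        _ = 0 := by rw [hr, map_mul, hρy, zero_mul]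
    · rw [coordinateAxesIdeal, Ideal.span_le]
      rintro _ ⟨i, j, hij, rfl⟩
      simpa [φ, hπ] using (hπ _).2 (hmul hij)
  exact ⟨(Ideal.quotientKerAlgEquivOfSurjective hsurj).symm.trans
    (Ideal.quotientEquivAlgOfEq K hker)⟩

theorem exists_algHom_adjoin_of_mul_eq {K P L F : Type*} [CommRing K] [CommRing P] [Algebra K P]
    [Field L] [Algebra K L] [Field F] [Algebra K F] {f : P →ₐ[K] L} (hf : Function.Injective f)
    (g : P →ₐ[K] F) {s : Set L} (hs : ∀ z ∈ s, ∃ u v, g v ≠ 0 ∧ z * f v = f u) :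
    ∃ ρ : Algebra.adjoin K s →ₐ[K] F, ∀ (z : Algebra.adjoin K s) (u v : P),
      z * f v = f u → ρ z * g v = g u := by
  have : IsDomain P := hf.isDomain f.toRingHom
  let M : Submonoid P := (nonZeroDivisors F).comap g
  have hgM (v : M) : IsUnit (g v) := IsUnit.mk0 _ (nonZeroDivisors.ne_zero v.2)
  have hfM (v : M) : IsUnit (f v) := by
    refine IsUnit.mk0 _ fun hv => (hgM v).ne_zero ?_
    rw [(map_eq_zero_iff f hf).1 hv, map_zero]
  let fM : Localization M →ₐ[K] L := IsLocalization.liftAlgHom (M := M) (f := f) hfM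
  let gM : Localization M →ₐ[K] F := IsLocalization.liftAlgHom (M := M) (f := g) hgM
  have hfM_algebraMap (u : P) : fM (algebraMap P _ u) = f u := IsLocalization.lift_eq hfM u
  have hgM_algebraMap (u : P) : gM (algebraMap P _ u) = g u := IsLocalization.lift_eq hgM u
  have hfM_inj : Function.Injective fM :=
    (IsLocalization.lift_injective_iff hfM).2 fun u v =>
      ⟨fun h => by simpa [hfM_algebraMap] using congrArg fM h, fun h => congrArg _ (hf h)⟩
  have hrange : Algebra.adjoin K s ≤ fM.range := Algebra.adjoin_le fun z hz => by
    obtain ⟨u, v, hv, hz⟩ := hs z hz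
    let v' : M := ⟨v, mem_nonZeroDivisors_of_ne_zero hv⟩
    exact ⟨IsLocalization.mk' _ u v',
      (IsLocalization.lift_mk'_spec ..).2 (hz.symm.trans (mul_comm z (f v)))⟩
  let e := AlgEquiv.ofInjective fM hfM_inj
  refine ⟨gM.comp (e.symm.toAlgHom.comp (Subalgebra.inclusion hrange)), fun z u v hz => ?_⟩
  obtain ⟨t, ht⟩ := e.surjective (Subalgebra.inclusion hrange z)
  have htz : fM t = z := congrArg Subtype.val ht
  have htu : t * algebraMap P _ v = algebraMap P _ u := hfM_inj
    (by simpa only [map_mul, hfM_algebraMap, htz] using hz)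
  simpa [hgM_algebraMap, ← ht] using congrArg gM htu

theorem sub_ne_zero_of_transcendental_of_isAlgebraic {R A : Type*} [CommRing R] [Ring A]
    [Algebra R A] {x z : A} (hx : Transcendental R x) (hz : IsAlgebraic R z) : x - z ≠ 0 :=
  fun h => hx (sub_eq_zero.1 h ▸ hz)

section Generators

variable {L : Type*} [Field L]

/-- The element `x * y ^ n / (x - a * y)`, which for `a = α i` is the generator `A i`. -/
def fracGen (n : ℕ) (x y a : L) : L :=
  x * y ^ n / (x - a * y)

variable {n : ℕ} {x y a b : L}

theorem fracGen_mul_sub (h : x - a * y ≠ 0) :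
    fracGen n x y a * (x - a * y) = x * y ^ n :=
  div_mul_cancel₀ _ h

theorem sub_mul_fracGen_mul_fracGen (ha : x - a * y ≠ 0) (hb : x - b * y ≠ 0) :
    (a - b) * (fracGen n x y a * fracGen n x y b) =
      y ^ n * (a * fracGen n x y a - b * fracGen n x y b) := by
  simp only [fracGen]
  field_simp
  ring

theorem fracGen_mul_add_eq (ha : x - a * y ≠ 0) (hb : x - b * y ≠ 0) :
    fracGen n x y b * ((a - b) * fracGen n x y a + b * y ^ n) = a * y ^ n * fracGen n x y a := by
  linear_combination sub_mul_fracGen_mul_fracGen (n := n) ha hb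

theorem transcendental_fracGen {S : Type*} [CommRing S] [NoZeroDivisors S] [Algebra S L]
    (hx : Transcendental S x) (hy : IsAlgebraic S y) (hy0 : y ≠ 0)
    (ha : IsAlgebraic S a) (ha0 : a ≠ 0) : Transcendental S (fracGen n x y a) := by
  intro hA
  have hmul := fracGen_mul_sub (n := n)
    (sub_ne_zero_of_transcendental_of_isAlgebraic hx (ha.mul hy))
  have hne : fracGen n x y a - y ^ n ≠ 0 := by
    intro h
    rw [sub_eq_zero.1 h] at hmul
    have : y ^ n * (a * y) = 0 := by linear_combination -hmul
    simp_all
  have hx_eq : x = a * y * fracGen n x y a * (fracGen n x y a - y ^ n)⁻¹ := by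
    rw [eq_mul_inv_iff_mul_eq₀ hne]
    linear_combination hmul
  refine hx ?_
  rw [hx_eq]
  exact ((ha.mul hy).mul hA).mul (hA.sub (hy.pow n)).inv

end Generators

theorem algebraicIndependent_update {ι R A : Type*} [DecidableEq ι] [CommRing R] [CommRing A]
    [Algebra R A] {v : ι → A} (hv : AlgebraicIndependent R v) {i : ι} {z : A}
    (hz : Transcendental (Algebra.adjoin R (v '' {i}ᶜ)) z) :
    AlgebraicIndependent R (Function.update v i z) := by
  rw [AlgebraicIndependent.iff_transcendental_adjoin_image i] at hv ⊢
  have himage : Function.update v i z '' {i}ᶜ = v '' {i}ᶜ :=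
    Set.image_congr fun j hj => Function.update_of_ne hj z v
  have hrestrict : (fun j : {j // j ≠ i} => Function.update v i z j) = fun j => v j.1 :=
    funext fun j => Function.update_of_ne j.2 z v
  rw [himage, hrestrict, Function.update_self]
  exact ⟨hv.1, hz⟩

section Specialization

variable {K L : Type*} [Field K] [Field L] [Algebra K L] {n : ℕ} {x y : L}

theorem transcendental_fst_adjoin_snd (hxy : AlgebraicIndependent K ![x, y]) :
    Transcendental (Algebra.adjoin K (![x, y] '' {0}ᶜ)) x :=
  hxy.transcendental_adjoin (i := 0) (by simp)

theorem isAlgebraic_snd_adjoin_snd : IsAlgebraic (Algebra.adjoin K (![x, y] '' {0}ᶜ)) y :=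
  isAlgebraic_algebraMap
    (⟨y, Algebra.subset_adjoin ⟨1, by simp⟩⟩ : Algebra.adjoin K (![x, y] '' {0}ᶜ))

theorem sub_algebraMap_mul_ne_zero (hxy : AlgebraicIndependent K ![x, y]) (a : K) :
    x - algebraMap K L a * y ≠ 0 :=
  sub_ne_zero_of_transcendental_of_isAlgebraic (transcendental_fst_adjoin_snd hxy)
    ((isAlgebraic_algebraMap (algebraMap K _ a)).mul isAlgebraic_snd_adjoin_snd)

theorem algebraicIndependent_fracGen (hxy : AlgebraicIndependent K ![x, y]) (n : ℕ) {a : K}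
    (ha : a ≠ 0) : AlgebraicIndependent K ![fracGen n x y (algebraMap K L a), y] := by
  have htrans := transcendental_fracGen (n := n) (transcendental_fst_adjoin_snd hxy)
    isAlgebraic_snd_adjoin_snd (hxy.ne_zero 1) (isAlgebraic_algebraMap (algebraMap K _ a))
    ((map_ne_zero (algebraMap K L)).2 ha)
  have hupdate : Function.update ![x, y] 0 (fracGen n x y (algebraMap K L a)) =
      ![fracGen n x y (algebraMap K L a), y] :=
    Fin.update_cons_zero (α := fun _ => L) x ![y] _
  exact hupdate ▸ algebraicIndependent_update hxy htrans

theorem exists_algHom_adjoin_fracGen {ι : Type*} [DecidableEq ι] (hn : 0 < n) {α : ι → K}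
    (hα : Function.Injective α) (hxy : AlgebraicIndependent K ![x, y]) {A : ι → L}
    (hA : ∀ i, A i = fracGen n x y (algebraMap K L (α i))) {i : ι} (hi : α i ≠ 0) :
    ∃ ρ : Algebra.adjoin K (insert y (Set.range A)) →ₐ[K] L,
      ∀ z : Algebra.adjoin K (insert y (Set.range A)), ((z : L) = y → ρ z = 0) ∧
      ∀ j, (z : L) = A j → ρ z = Pi.single (M := fun _ => L) i (A i) j := by
  have hind : AlgebraicIndependent K ![A i, y] := hA i ▸ algebraicIndependent_fracGen hxy n hi
  -- `f` embeds `K[T, Y]` as `K[A i, y]`, and `g` is reduction modulo `Y`.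
  let f : MvPolynomial (Fin 2) K →ₐ[K] L := aeval ![A i, y]
  let g : MvPolynomial (Fin 2) K →ₐ[K] L := aeval ![A i, 0]
  let num : MvPolynomial (Fin 2) K := C (α i) * X 1 ^ n * X 0
  let den (j : ι) : MvPolynomial (Fin 2) K := C (α i - α j) * X 0 + C (α j) * X 1 ^ n
  have hfrac (j : ι) : A j * f (den j) = f num := by
    simpa [f, num, den, hA] using fracGen_mul_add_eq (n := n)
      (sub_algebraMap_mul_ne_zero hxy (α i)) (sub_algebraMap_mul_ne_zero hxy (α j))
  have hg_num : g num = 0 := by simp [g, num, hn.ne']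
  have hg_den {j : ι} (hj : j ≠ i) : g (den j) ≠ 0 := by
    have hsub : algebraMap K L (α i) - algebraMap K L (α j) ≠ 0 :=
      sub_ne_zero.2 fun h => hj (hα ((algebraMap K L).injective h)).symm
    simpa [g, den, hn.ne'] using And.intro hsub (hind.ne_zero 0)
  have hgens : ∀ z ∈ insert y (Set.range A), ∃ u v, g v ≠ 0 ∧ z * f v = f u := by
    rintro _ (rfl | ⟨j, rfl⟩)
    · exact ⟨X 1, 1, by simp, by simp [f]⟩
    · by_cases hj : j = i
      · exact ⟨X 0, 1, by simp, by simp [f, hj]⟩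
      · exact ⟨num, den j, hg_den hj, hfrac j⟩
  obtain ⟨ρ, hρ⟩ := exists_algHom_adjoin_of_mul_eq (f := f) hind g hgens
  refine ⟨ρ, fun z => ⟨fun hz => ?_, fun j hz => ?_⟩⟩
  · simpa [g] using hρ z (X 1) 1 (by simp [f, hz])
  · by_cases hj : j = i
    · subst hj
      simpa [g] using hρ z (X 0) 1 (by simp [f, hz])
    · rw [Pi.single_eq_of_ne hj]
      have hmul : ρ z * g (den j) = 0 := (hρ z num (den j) (hz ▸ hfrac j)).trans hg_num
      exact (mul_eq_zero.1 hmul).resolve_right (hg_den hj)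

end Specialization

theorem quotient_iso_squarefree_general {K L ι : Type*} [Field K] [Field L] [Algebra K L]
    [Nonempty ι] {n : ℕ} (hn : 0 < n) {α : ι → K} (hα : Function.Injective α)
    (hα0 : ∀ i, α i ≠ 0) {x y : L} (hxy : AlgebraicIndependent K ![x, y]) {A : ι → L}
    (hA : ∀ i, A i = fracGen n x y (algebraMap K L (α i)))
    {yR : Algebra.adjoin K (insert y (Set.range A))} (hyR : (yR : L) = y) :
    Nonempty ((Algebra.adjoin K (insert y (Set.range A)) ⧸ Ideal.span {yR}) ≃ₐ[K]
      (MvPolynomial ι K ⧸ coordinateAxesIdeal ι K)) := by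
  classical
  let AR (i : ι) : Algebra.adjoin K (insert y (Set.range A)) :=
    ⟨A i, Algebra.subset_adjoin (Or.inr ⟨i, rfl⟩)⟩
  have hgen : Algebra.adjoin K (insert yR (Set.range AR)) = ⊤ := by
    rw [← Algebra.adjoin_adjoin_coe_preimage (s := insert y (Set.range A))]
    refine congrArg _ (Set.ext fun z => ?_)
    simp [AR, Subtype.ext_iff, hyR]
  have hmul : Pairwise fun i j => yR ∣ AR i * AR j := fun i j hij => by
    have hunit : IsUnit (algebraMap K (Algebra.adjoin K (insert y (Set.range A))) (α i - α j)) :=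
      (IsUnit.mk0 _ (sub_ne_zero.2 (hα.ne hij))).map _
    refine hunit.dvd_mul_left.1 ?_
    refine (dvd_pow_self yR hn.ne').trans ⟨α i • AR i - α j • AR j, Subtype.ext ?_⟩
    simpa [AR, hA, hyR, Algebra.smul_def] using sub_mul_fracGen_mul_fracGen
      (sub_algebraMap_mul_ne_zero hxy (α i)) (sub_algebraMap_mul_ne_zero hxy (α j))
  refine nonempty_quotient_algEquiv_coordinateAxes (L := L) hgen hmul fun i => ?_
  obtain ⟨ρ, hρ⟩ := exists_algHom_adjoin_fracGen hn hα hxy hA (hα0 i)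
  have htrans : Transcendental K (A i) :=
    hA i ▸ (algebraicIndependent_fracGen hxy n (hα0 i)).transcendental 0
  exact ⟨ρ, A i, htrans, (hρ yR).1 hyR, fun j => (hρ (AR j)).2 j rfl⟩

theorem algebraicIndependent_algebraMap_X (σ K : Type*) [CommRing K] [IsDomain K] :
    AlgebraicIndependent K fun i : σ =>
      algebraMap (MvPolynomial σ K) (FractionRing (MvPolynomial σ K)) (X i) :=
  (algebraicIndependent_X σ K).map' (f := IsScalarTower.toAlgHom K _ _)
    (IsFractionRing.injective _ _)

/-- Let `K` be a field, `n, k` positive integers, and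
`α₁,…,α_k` distinct nonzero elements of `K`.  With
`Aᵢ = XYⁿ/(X - αᵢY) ∈ K(X,Y)` and `R = K[Y, A₁,…,A_k]`, the quotient `R/YR` is
isomorphic as a `K`-algebra to `K[T₁,…,T_k]/(TᵢTⱼ : i ≠ j)`. -/
theorem quotient_iso_squarefree (K : Type) [Field K] (n k : ℕ) (hn : 0 < n)
    (hk : 0 < k) (α : Fin k → K) (hα : Function.Injective α)
    (hα0 : ∀ i, α i ≠ 0)
    (x y : FractionRing (MvPolynomial (Fin 2) K))
    (hx : x = algebraMap (MvPolynomial (Fin 2) K) _ (X 0))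
    (hy : y = algebraMap (MvPolynomial (Fin 2) K) _ (X 1))
    (A : Fin k → FractionRing (MvPolynomial (Fin 2) K))
    (hA : ∀ i, A i = x * y ^ n / (x - algebraMap K _ (α i) * y))
    (R : Subalgebra K (FractionRing (MvPolynomial (Fin 2) K)))
    (hR : R = Algebra.adjoin K ({y} ∪ Set.range A))
    (yR : ↥R) (hyR : (yR : FractionRing (MvPolynomial (Fin 2) K)) = y)
    (J : Ideal (MvPolynomial (Fin k) K))
    (hJ : J = Ideal.span {f | ∃ i j : Fin k, i ≠ j ∧ f = X i * X j}) :
    Nonempty ((↥R ⧸ Ideal.span {yR}) ≃ₐ[K] (MvPolynomial (Fin k) K ⧸ J)) := by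
  rw [Set.singleton_union] at hR
  subst hR hJ
  have : Nonempty (Fin k) := ⟨⟨0, hk⟩⟩
  have hxy : AlgebraicIndependent K ![x, y] := by
    convert algebraicIndependent_algebraMap_X (Fin 2) K using 1
    exact funext (Fin.forall_fin_two.2 ⟨hx, hy⟩)
  exact quotient_iso_squarefree_general hn hα hα0 hxy hA hyR
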